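/- arXiv:1411.0182 — 4 statements merged into one kernel-verified Lean document; each statement's English description precedes it below -/
import Mathlib

section
/- Let U ⊆ ℝ^n × ℝ^n be a convex open set and let φ : U → ℝ^n × ℝ^n, φ(p,q) = (P(p,q), Q(p,q)), be a twice continuously differentiable map. For x = (p,q) ∈ U define the linear functional ω(x) on ℝ^n × ℝ^n by ω(x)[(v_p, v_q)] = ⟨P(x), DQ(x)[(v_p,v_q)]⟩ − ⟨p, v_q⟩, where DQ(x) is the Fréchet derivative of Q at x. Then φ is symplectic on U (meaning Dφ(x)ᵀ J Dφ(x) = J for every x ∈ U, where J is the standard 2n×2n symplectic matrix with blocks J = [[0, −I],[I, 0]]) if and only if there exists a differentiable function S : U → ℝ with DS(x) = ω(x) for every x ∈ U (i.e., P dQ − p dq is a total differential). -/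
/-!
The one-form `ω = P dQ - p dq` is differentiable on `U` because `φ` is `C²`, and the symmetry of
the second derivative of `Q` cancels the second-order terms in its exterior derivative, leaving
`dω = dP ∧ dQ - dp ∧ dq`. With `σ` the symplectic form, this reads
`dω(u, v) = σ(u, v) - σ(Dφ u, Dφ v)`, so `φ` is symplectic iff `ω` is closed. On a convex open set,
closed one-forms are exact (Poincaré lemma, `Convex.exists_forall_hasFDerivAt_of_fderiv_symmetric`);
conversely, an exact one-form is closed by the symmetry of second derivatives of its primitive.
-/

open scoped RealInnerProductSpace

/-- The canonical symplectic bilinear form on `ℝ^n × ℝ^n`, i.e. `v ↦ w ↦ vᵀ J w`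
with `J = [[0, -I], [I, 0]]`. -/
noncomputable def symplecticForm (n : ℕ) (v w : EuclideanSpace ℝ (Fin n) × EuclideanSpace ℝ (Fin n)) : ℝ :=
  ⟪v.2, w.1⟫ - ⟪v.1, w.2⟫

section

variable {E : Type*} [NormedAddCommGroup E] [InnerProductSpace ℝ E]

/-- The real inner product as a continuous bilinear map, linear over `ℝ` in both arguments
(`innerSL ℝ` is typed as conjugate-linear in the first one). -/
noncomputable def innerBilin : E →L[ℝ] E →L[ℝ] ℝ :=
  (isBoundedBilinearMap_inner (𝕜 := ℝ) (E := E)).toContinuousLinearMap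

@[simp] lemma innerBilin_apply (a b : E) : innerBilin a b = ⟪a, b⟫ := rfl

/-- The one-form `P dQ - p dq` attached to `φ = (P, Q)`. -/
noncomputable def actionForm (φ : E × E → E × E) (x : E × E) : E × E →L[ℝ] ℝ :=
  (innerBilin (φ x).1).comp (fderiv ℝ (fun y => (φ y).2) x)
    - (innerBilin x.1).comp (ContinuousLinearMap.snd ℝ E E)

lemma actionForm_apply (φ : E × E → E × E) (x v : E × E) :
    actionForm φ x v = ⟪(φ x).1, fderiv ℝ (fun y => (φ y).2) x v⟫ - ⟪x.1, v.2⟫ := rfl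

/-- The derivative of `P dQ - p dq`, before antisymmetrization. -/
lemma hasFDerivAt_actionForm {φ : E × E → E × E} {x : E × E} (hφ : ContDiffAt ℝ 2 φ x) :
    ∃ ω' : E × E →L[ℝ] E × E →L[ℝ] ℝ, HasFDerivAt (actionForm φ) ω' x ∧
      ∀ u v, ω' u v = ⟪(fderiv ℝ φ x u).1, (fderiv ℝ φ x v).2⟫
        + ⟪(φ x).1, fderiv ℝ (fderiv ℝ (fun y => (φ y).2)) x u v⟫ - ⟪u.1, v.2⟫ := by
  have hd : HasFDerivAt φ (fderiv ℝ φ x) x := (hφ.differentiableAt (by norm_num)).hasFDerivAt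
  have hQ : fderiv ℝ (fun y => (φ y).2) x = (ContinuousLinearMap.snd ℝ E E).comp (fderiv ℝ φ x) :=
    hd.snd.fderiv
  have hQ2 : HasFDerivAt (fderiv ℝ (fun y => (φ y).2))
      (fderiv ℝ (fderiv ℝ (fun y => (φ y).2)) x) x :=
    ((hφ.snd.fderiv_right (m := 1) (by norm_num)).differentiableAt (by norm_num)).hasFDerivAt
  have h1 := ((innerBilin (E := E)).hasFDerivAt.comp x hd.fst).clm_comp hQ2
  have h2 := ((innerBilin (E := E)).hasFDerivAt.comp x
    (hasFDerivAt_id (𝕜 := ℝ) x).fst).clm_comp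
      (hasFDerivAt_const (ContinuousLinearMap.snd ℝ E E) x)
  refine ⟨_, h1.sub h2, fun u v => ?_⟩
  simp [hQ]
  ring

/-- On a pair `(u, v)`, the exterior derivative of `P dQ - p dq` vanishes at `x` iff `Dφ(x)`
preserves the symplectic form. -/
lemma fderiv_actionForm_symm_iff {n : ℕ}
    {φ : EuclideanSpace ℝ (Fin n) × EuclideanSpace ℝ (Fin n) →
      EuclideanSpace ℝ (Fin n) × EuclideanSpace ℝ (Fin n)}
    {x : EuclideanSpace ℝ (Fin n) × EuclideanSpace ℝ (Fin n)} (hφ : ContDiffAt ℝ 2 φ x)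
    (u v : EuclideanSpace ℝ (Fin n) × EuclideanSpace ℝ (Fin n)) :
    fderiv ℝ (actionForm φ) x u v = fderiv ℝ (actionForm φ) x v u ↔
      symplecticForm n (fderiv ℝ φ x u) (fderiv ℝ φ x v) = symplecticForm n u v := by
  obtain ⟨ω', h, happ⟩ := hasFDerivAt_actionForm hφ
  have hs := (hφ.snd.isSymmSndFDerivAt (by simp)) u v
  rw [h.fderiv, happ, happ, hs]
  unfold symplecticForm
  rw [real_inner_comm (fderiv ℝ φ x v).1, real_inner_comm v.1 u.2]
  constructor <;> intro h <;> linarith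

end

/-- A twice continuously differentiable map `φ = (P, Q)` on a convex open set
`U ⊆ ℝ^n × ℝ^n` is symplectic on `U` (its Jacobian preserves the symplectic form
everywhere on `U`) if and only if the one-form `P dQ - p dq` is a total differential,
i.e. there exists a differentiable `S : U → ℝ` with `DS(x) = ω(x)` on `U`, where
`ω(x)[(v_p, v_q)] = ⟨P(x), DQ(x)[(v_p, v_q)]⟩ - ⟨p, v_q⟩`. -/
theorem symplectic_iff_total_differential
    (n : ℕ)
    (U : Set (EuclideanSpace ℝ (Fin n) × EuclideanSpace ℝ (Fin n)))
    (hU : IsOpen U) (hUconv : Convex ℝ U)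
    (φ : EuclideanSpace ℝ (Fin n) × EuclideanSpace ℝ (Fin n) →
         EuclideanSpace ℝ (Fin n) × EuclideanSpace ℝ (Fin n))
    (hφ : ContDiffOn ℝ 2 φ U) :
    (∀ x ∈ U, ∀ v w : EuclideanSpace ℝ (Fin n) × EuclideanSpace ℝ (Fin n),
        symplecticForm n (fderiv ℝ φ x v) (fderiv ℝ φ x w) = symplecticForm n v w)
    ↔
    (∃ S : EuclideanSpace ℝ (Fin n) × EuclideanSpace ℝ (Fin n) → ℝ,
      ∀ x ∈ U, DifferentiableAt ℝ S x ∧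
        ∀ v : EuclideanSpace ℝ (Fin n) × EuclideanSpace ℝ (Fin n),
          fderiv ℝ S x v
            = ⟪(φ x).1, fderiv ℝ (fun y => (φ y).2) x v⟫ - ⟪x.1, v.2⟫) := by
  have hc : ∀ x ∈ U, ContDiffAt ℝ 2 φ x := fun x hx => hφ.contDiffAt (hU.mem_nhds hx)
  have hω : ∀ x ∈ U, DifferentiableAt ℝ (actionForm φ) x := fun x hx =>
    let ⟨_, h, _⟩ := hasFDerivAt_actionForm (hc x hx)
    h.differentiableAt
  constructor
  · intro h
    obtain ⟨S, hS⟩ := hUconv.exists_forall_hasFDerivAt_of_fderiv_symmetric hU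
      (fun x hx => (hω x hx).differentiableWithinAt)
      (fun x hx u v => (fderiv_actionForm_symm_iff (hc x hx) u v).2 (h x hx u v))
    exact ⟨S, fun x hx => ⟨(hS x hx).differentiableAt, fun v => by
      rw [(hS x hx).fderiv, actionForm_apply]⟩⟩
  · rintro ⟨S, hS⟩ x hx u v
    refine (fderiv_actionForm_symm_iff (hc x hx) u v).1 ?_
    refine second_derivative_symmetric_of_eventually (f := S) ?_ (hω x hx).hasFDerivAt u v
    filter_upwards [hU.mem_nhds hx] with y hy
    have hy' : fderiv ℝ S y = actionForm φ y :=
      ContinuousLinearMap.ext fun w => ((hS y hy).2 w).trans (actionForm_apply φ y w).symm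
    exact hy' ▸ (hS y hy).1.hasFDerivAt
end

section
/- Let N ≥ 1, let w : ℝ → ℝ be continuous and strictly positive on (−1,1) and integrable on [−1,1], let P be a polynomial of degree N satisfying ∫_{−1}^{1} w(t) P(t) r(t) dt = 0 for every polynomial r of degree at most N−1, and let t_1 < t_2 < … < t_N denote the N distinct roots of P in (−1,1). For k = 1,…,N let ℓ_k be the Lagrange basis polynomial of the nodes t_1,…,t_N (the unique polynomial of degree at most N−1 with ℓ_k(t_i) = δ_{ik}), and define the Gauss weights w_k := ∫_{−1}^{1} w(t) ℓ_k(t) dt. Then for every polynomial f of degree at most 2N−1, ∫_{−1}^{1} w(t) f(t) dt = Σ_{k=1}^{N} w_k f(t_k). -/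
/-!
Divide `f` by `P`: `f = P * q + r` with `deg q < N` and `deg r < N`. The term `w P q` integrates to
zero by orthogonality. The remainder `r` agrees with `f` at the nodes, which are roots of `P`, so by
Lagrange interpolation `r = ∑ f(t_k) ℓ_k`; integrating this against `w` gives the quadrature sum.
-/

open MeasureTheory intervalIntegral

theorem intervalIntegrable_mul_eval {w : ℝ → ℝ} {a b : ℝ}
    (hw : IntervalIntegrable w volume a b) (p : Polynomial ℝ) :
    IntervalIntegrable (fun s => w s * p.eval s) volume a b :=
  hw.mul_continuousOn p.continuous.continuousOn

/-- Gauss quadrature at the roots of the `N`-th orthogonal polynomial, with weights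
`w_k = ∫ w ℓ_k`, integrates exactly every polynomial of degree at most `2N - 1`. -/
theorem gauss_quadrature_exact
    (N : ℕ) (hN : 1 ≤ N)
    (w : ℝ → ℝ)
    (hw_cont : ContinuousOn w (Set.Ioo (-1 : ℝ) 1))
    (hw_pos : ∀ t ∈ Set.Ioo (-1 : ℝ) 1, 0 < w t)
    (hw_int : IntervalIntegrable w volume (-1 : ℝ) 1)
    (P : Polynomial ℝ) (hPdeg : P.natDegree = N)
    (horth : ∀ r : Polynomial ℝ, r.natDegree < N →
      ∫ t in (-1 : ℝ)..1, w t * P.eval t * r.eval t = 0)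
    (t : Fin N → ℝ) (ht_mono : StrictMono t)
    (ht_mem : ∀ i, t i ∈ Set.Ioo (-1 : ℝ) 1)
    (ht_roots : P.roots = (Finset.univ.val : Multiset (Fin N)).map t)
    (gw : Fin N → ℝ)
    (hgw : ∀ k, gw k = ∫ s in (-1 : ℝ)..1, w s * (Lagrange.basis Finset.univ t k).eval s) :
    ∀ f : Polynomial ℝ, f.natDegree < 2 * N →
      ∫ s in (-1 : ℝ)..1, w s * f.eval s = ∑ k, gw k * f.eval (t k) := by
  intro f hf
  have hP0 : P ≠ 0 := by
    rintro rfl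
    rw [Polynomial.natDegree_zero] at hPdeg
    omega
  have hdiv : P * (f / P) + f % P = f := EuclideanDomain.div_add_mod f P
  have hq : (f / P).natDegree < N := by
    have hlc : P.leadingCoeff⁻¹ ≠ 0 := inv_ne_zero (Polynomial.leadingCoeff_ne_zero.mpr hP0)
    rw [Polynomial.div_def, Polynomial.natDegree_C_mul hlc,
      Polynomial.natDegree_divByMonic _ (Polynomial.monic_mul_leadingCoeff_inv hP0),
      Polynomial.natDegree_mul_C hlc]
    omega
  have hr : (f % P).degree < (Finset.univ : Finset (Fin N)).card := by
    rw [Finset.card_univ, Fintype.card_fin, ← hPdeg, ← Polynomial.degree_eq_natDegree hP0]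
    exact EuclideanDomain.mod_lt f hP0
  have hroot (k : Fin N) : P.eval (t k) = 0 := by
    have hk : t k ∈ P.roots := by
      rw [ht_roots]
      exact Multiset.mem_map_of_mem t (Finset.mem_univ k)
    exact (Polynomial.mem_roots'.mp hk).2
  have hval (k : Fin N) : (f % P).eval (t k) = f.eval (t k) := by
    conv_rhs => rw [← hdiv]
    simp [hroot k]
  have hinterp : f % P =
      ∑ k, Polynomial.C (f.eval (t k)) * Lagrange.basis Finset.univ t k := by
    rw [Lagrange.eq_interpolate_of_eval_eq (fun k => f.eval (t k)) ht_mono.injective.injOn hr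
      (fun k _ => hval k), Lagrange.interpolate_apply]
  have hsplit (s : ℝ) : w s * f.eval s =
      w s * (P * (f / P)).eval s + w s * (f % P).eval s := by
    rw [← mul_add, ← Polynomial.eval_add, hdiv]
  have hzero : ∫ s in (-1 : ℝ)..1, w s * (P * (f / P)).eval s = 0 := by
    simpa only [Polynomial.eval_mul, mul_assoc] using horth (f / P) hq
  have hrem (s : ℝ) : w s * (f % P).eval s =
      ∑ k, w s * (Lagrange.basis Finset.univ t k).eval s * f.eval (t k) := by
    rw [hinterp, Polynomial.eval_finsetSum, Finset.mul_sum]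
    refine Finset.sum_congr rfl fun k _ => ?_
    rw [Polynomial.eval_mul, Polynomial.eval_C]
    ring
  simp_rw [hsplit]
  rw [integral_add (intervalIntegrable_mul_eval hw_int _) (intervalIntegrable_mul_eval hw_int _),
    hzero, zero_add]
  simp_rw [hrem]
  rw [integral_finsetSum fun k _ => (intervalIntegrable_mul_eval hw_int _).mul_const _]
  refine Finset.sum_congr rfl fun k _ => ?_
  rw [intervalIntegral.integral_mul_const, hgw]
end

section
/- Let N ≥ 1, let w : ℝ → ℝ be continuous and strictly positive on (−1,1) and integrable on [−1,1], let P be a polynomial of degree N satisfying ∫_{−1}^{1} w(t) P(t) r(t) dt = 0 for every polynomial r of degree at most N−1, let t_1 < … < t_N be the roots of P in (−1,1), let ℓ_k be the Lagrange basis polynomials of these nodes, and let w_k := ∫_{−1}^{1} w(t) ℓ_k(t) dt be the Gauss weights. Then every Gauss weight is strictly positive: w_k > 0 for all k = 1,…,N. -/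
/-!
For a basis polynomial `ℓ = ℓ_k`, the polynomial `ℓ² - ℓ` vanishes at every node, so it is `P * q`
with `deg q < N`, since `deg ℓ < N`. Orthogonality then gives `∫ w ℓ = ∫ w ℓ²`, and the latter is
positive because `w ℓ²` is positive on `(-1, 1)` away from the finitely many roots of `ℓ`.
-/

open MeasureTheory intervalIntegral

/-- A polynomial with exactly the simple roots `t i`, as many as its degree, divides every
polynomial vanishing at all the `t i`. -/
theorem dvd_of_eval_eq_zero {N : ℕ} {P Q : Polynomial ℝ} {t : Fin N → ℝ}
    (hP : P ≠ 0) (hPdeg : P.natDegree = N) (ht : Function.Injective t)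
    (hroots : P.roots = (Finset.univ.val : Multiset (Fin N)).map t)
    (hQ : ∀ i, Q.eval (t i) = 0) : P ∣ Q := by
  have hcard : P.roots.card = P.natDegree := by simp [hroots, hPdeg]
  rw [← Polynomial.C_leadingCoeff_mul_prod_multiset_X_sub_C hcard, hroots, Multiset.map_map]
  have hu : IsUnit (Polynomial.C P.leadingCoeff) :=
    Polynomial.isUnit_C.2 (Polynomial.leadingCoeff_ne_zero.2 hP).isUnit
  rw [hu.mul_left_dvd]
  exact Finset.prod_dvd_of_coprime
    (fun i _ j _ hij => Polynomial.pairwise_coprime_X_sub_C ht hij)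
    fun i _ => Polynomial.dvd_iff_isRoot.2 (hQ i)

theorem integral_mul_sq_pos {w : ℝ → ℝ}
    (hw_pos : ∀ t ∈ Set.Ioo (-1 : ℝ) 1, 0 < w t)
    (hw_int : IntervalIntegrable w volume (-1 : ℝ) 1) {L : Polynomial ℝ} (hL : L ≠ 0) :
    0 < ∫ s in (-1 : ℝ)..1, w s * (L.eval s) ^ 2 := by
  have hint : IntervalIntegrable (fun s => w s * (L.eval s) ^ 2) volume (-1 : ℝ) 1 :=
    hw_int.mul_continuousOn (by fun_prop)
  have hnn : 0 ≤ᵐ[volume.restrict (Set.uIoc (-1 : ℝ) 1)] fun s => w s * (L.eval s) ^ 2 := by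
    -- The sign of `w 1` is unknown, but the endpoint is a null set.
    rw [Set.uIoc_of_le (by norm_num), ← Measure.restrict_congr_set Ioo_ae_eq_Ioc]
    filter_upwards [ae_restrict_mem measurableSet_Ioo] with s hs
    exact mul_nonneg (hw_pos s hs).le (sq_nonneg _)
  rw [intervalIntegral.integral_pos_iff_support_of_nonneg_ae' hnn hint]
  refine ⟨by norm_num, ?_⟩
  have hsub : Set.Ioo (-1 : ℝ) 1 \ (L.roots.toFinset : Set ℝ) ⊆
      Function.support (fun s => w s * (L.eval s) ^ 2) ∩ Set.Ioc (-1) 1 := by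
    rintro s ⟨hs, hr⟩
    refine ⟨?_, Set.Ioo_subset_Ioc_self hs⟩
    have : L.eval s ≠ 0 := fun h => hr (by simp [hL, h])
    exact mul_ne_zero (hw_pos s hs).ne' (pow_ne_zero 2 this)
  refine lt_of_lt_of_le ?_ (measure_mono hsub)
  rw [measure_sdiff_null (L.roots.toFinset.finite_toSet.measure_zero volume)]
  simp

/-- The Gauss quadrature weights `w_k = ∫ w ℓ_k` at the roots of the `N`-th orthogonal
polynomial are strictly positive. -/
theorem gauss_weights_pos
    (N : ℕ) (hN : 1 ≤ N)
    (w : ℝ → ℝ)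
    (hw_cont : ContinuousOn w (Set.Ioo (-1 : ℝ) 1))
    (hw_pos : ∀ t ∈ Set.Ioo (-1 : ℝ) 1, 0 < w t)
    (hw_int : IntervalIntegrable w volume (-1 : ℝ) 1)
    (P : Polynomial ℝ) (hPdeg : P.natDegree = N)
    (horth : ∀ r : Polynomial ℝ, r.natDegree < N →
      ∫ t in (-1 : ℝ)..1, w t * P.eval t * r.eval t = 0)
    (t : Fin N → ℝ) (ht_mono : StrictMono t)
    (ht_mem : ∀ i, t i ∈ Set.Ioo (-1 : ℝ) 1)
    (ht_roots : P.roots = (Finset.univ.val : Multiset (Fin N)).map t)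
    (gw : Fin N → ℝ)
    (hgw : ∀ k, gw k = ∫ s in (-1 : ℝ)..1, w s * (Lagrange.basis Finset.univ t k).eval s) :
    ∀ k, 0 < gw k := by
  intro k
  rw [hgw k]
  set L := Lagrange.basis Finset.univ t k with hLdef
  have hinj : Function.Injective t := ht_mono.injective
  have hL : L ≠ 0 := Lagrange.basis_ne_zero hinj.injOn (Finset.mem_univ k)
  have hP : P ≠ 0 := by
    rintro rfl
    simp at hPdeg
    omega
  obtain ⟨q, hq⟩ : P ∣ L ^ 2 - L := by
    refine dvd_of_eval_eq_zero hP hPdeg hinj ht_roots fun i => ?_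
    by_cases hik : k = i
    · subst hik
      simp [hLdef, Lagrange.eval_basis_self hinj.injOn (Finset.mem_univ k)]
    · simp [hLdef, Lagrange.eval_basis_of_ne hik (Finset.mem_univ i)]
  have hLdeg : L.natDegree = N - 1 := by
    have h := Lagrange.degree_basis hinj.injOn (Finset.mem_univ k)
    rw [Finset.card_fin] at h
    exact Polynomial.natDegree_eq_of_degree_eq_some h
  have hqdeg : q.natDegree < N := by
    by_cases hq0 : q = 0
    · rw [hq0, Polynomial.natDegree_zero]
      omega
    · have h1 : (L ^ 2 - L).natDegree ≤ max (L ^ 2).natDegree L.natDegree :=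
        Polynomial.natDegree_sub_le _ _
      rw [hq, Polynomial.natDegree_mul hP hq0, Polynomial.natDegree_pow] at h1
      omega
  have hpos := integral_mul_sq_pos hw_pos hw_int hL
  have hzero := horth q hqdeg
  have hsplit : ∀ s, w s * P.eval s * q.eval s = w s * (L.eval s) ^ 2 - w s * L.eval s := by
    intro s
    have h := congrArg (Polynomial.eval s) hq
    simp only [Polynomial.eval_sub, Polynomial.eval_pow, Polynomial.eval_mul] at h
    rw [mul_assoc, ← h]
    ring
  simp only [hsplit] at hzero
  rw [intervalIntegral.integral_sub (hw_int.mul_continuousOn (by fun_prop))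
    (hw_int.mul_continuousOn (by fun_prop))] at hzero
  linarith
end

section
/- Let N ≥ 1, let w : ℝ → ℝ be continuous and strictly positive on (−1,1) and integrable on [−1,1], let B_0,…,B_{N−1} be polynomials with deg B_j = j mutually orthogonal with respect to w and norms γ_j := ∫_{−1}^{1} w(t) B_j(t)^2 dt > 0. Let (t_i^b, w_i^b)_{i=1}^{N} be distinct nodes in [−1,1] and weights with Σ_i w_i^b f(t_i^b) = ∫_{−1}^{1} w(t) f(t) dt for every polynomial f of degree at most 2N−1, and let (t_i^l, w_i^l)_{i=1}^{N} be distinct nodes in [−1,1] and weights with Σ_i w_i^l f(t_i^l) = ∫_{−1}^{1} f(t) dt for every polynomial f of degree at most 2N−1. For grid values x ∈ ℝ^N define (A x)_i := Σ_{j=0}^{N−1} γ_j^{−1} ( Σ_{m=1}^{N} w_m^b x_m B_j(t_m^b) ) B_j(t_i^l). Then for all polynomials p, q of degree at most N−1, with x_i := p(t_i^b) and y_i := q(t_i^b): ∫_{−1}^{1} p(t) q(t) dt = Σ_{i=1}^{N} w_i^l (A x)_i (A y)_i. That is, the pullback metric G* = Aᵀ diag(w^l) A computes the exact (unweighted) L²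 inner product of two polynomials of degree at most N−1 from their values on an arbitrary quadrature grid for the weight w. -/
/-!
A polynomial of degree at most `N - 1` is a linear combination of `B₀, …, B_{N-1}`, since these
have degrees `0, …, N - 1` and are nonzero (`mem_span_of_degree_lt`). All products `Bᵢ Bⱼ` have
degree at most `2 * N - 2`, so the rule for `w` evaluates their integrals exactly and the `Bⱼ` are
orthogonal for the discrete inner product as well, with the same norms. Hence the discrete
expansion underlying `A` recovers the exact coefficients of `p`, and `A` sends the values of `p` on
the first grid to its values on the second one. There the rule for the unit weight is exact
on `p * q`.
-/

open MeasureTheory intervalIntegral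

open Polynomial in
/-- Polynomials `B₀, …, B_{N-1}` with `Bⱼ` nonzero of degree `j` span all polynomials of degree
less than `N`. -/
theorem mem_span_of_degree_lt {N : ℕ} (B : Fin N → ℝ[X])
    (hBdeg : ∀ j, (B j).natDegree = (j : ℕ)) (hB0 : ∀ j, B j ≠ 0) :
    ∀ n ≤ N, ∀ p : ℝ[X], p.degree < n → p ∈ Submodule.span ℝ (Set.range B) := by
  intro n
  induction n with
  | zero =>
    intro _ p hp
    have : p = 0 := by
      rw [← degree_eq_bot]
      simpa using hp
    simp [this]
  | succ n ih =>
    intro hn p hp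
    let k : Fin N := ⟨n, hn⟩
    have hkdeg : (B k).natDegree = n := hBdeg k
    have hlead : (B k).coeff n ≠ 0 := by
      have h := leadingCoeff_ne_zero.mpr (hB0 k)
      rwa [leadingCoeff, hkdeg] at h
    -- Cancel the coefficient of degree `n` against a multiple of `B k`.
    have hlow : p - (p.coeff n / (B k).coeff n) • B k ∈ Submodule.span ℝ (Set.range B) := by
      apply ih (by omega)
      rw [degree_lt_iff_coeff_zero]
      intro m hm
      rw [coeff_sub, coeff_smul, smul_eq_mul]
      rcases hm.eq_or_lt with rfl | hm
      · field_simp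
        ring
      · have h1 : p.coeff m = 0 := (degree_lt_iff_coeff_zero p (n + 1)).1 hp m hm
        have h2 : (B k).coeff m = 0 := coeff_eq_zero_of_natDegree_lt (by omega)
        simp [h1, h2]
    have hk : B k ∈ Submodule.span ℝ (Set.range B) := Submodule.subset_span ⟨k, rfl⟩
    simpa using add_mem hlow (Submodule.smul_mem _ (p.coeff n / (B k).coeff n) hk)

/-- The pullback metric `G* = Aᵀ diag(w^l) A`, where `A` maps grid values on a
quadrature grid for the weight `w` to values on a quadrature grid for the unit weight
via the discrete orthogonal expansion, computes the exact (unweighted) `L²` inner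
product of two polynomials of degree at most `N-1` from their grid values. -/
theorem pullback_metric_exact
    (N : ℕ) (hN : 1 ≤ N)
    (w : ℝ → ℝ)
    (hw_cont : ContinuousOn w (Set.Ioo (-1 : ℝ) 1))
    (hw_pos : ∀ t ∈ Set.Ioo (-1 : ℝ) 1, 0 < w t)
    (hw_int : IntervalIntegrable w volume (-1 : ℝ) 1)
    (B : Fin N → Polynomial ℝ)
    (hBdeg : ∀ j, (B j).natDegree = (j : ℕ))
    (hBorth : ∀ i j, i ≠ j → ∫ s in (-1 : ℝ)..1, w s * (B i).eval s * (B j).eval s = 0)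
    (γ : Fin N → ℝ)
    (hγ : ∀ j, γ j = ∫ s in (-1 : ℝ)..1, w s * (B j).eval s ^ 2)
    (hγ_pos : ∀ j, 0 < γ j)
    (tb : Fin N → ℝ) (htb_inj : Function.Injective tb)
    (htb_mem : ∀ i, tb i ∈ Set.Icc (-1 : ℝ) 1)
    (wb : Fin N → ℝ)
    (hquadb : ∀ f : Polynomial ℝ, f.natDegree < 2 * N →
      ∑ i, wb i * f.eval (tb i) = ∫ s in (-1 : ℝ)..1, w s * f.eval s)
    (tl : Fin N → ℝ) (htl_inj : Function.Injective tl)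
    (htl_mem : ∀ i, tl i ∈ Set.Icc (-1 : ℝ) 1)
    (wl : Fin N → ℝ)
    (hquadl : ∀ f : Polynomial ℝ, f.natDegree < 2 * N →
      ∑ i, wl i * f.eval (tl i) = ∫ s in (-1 : ℝ)..1, f.eval s)
    (A : (Fin N → ℝ) → Fin N → ℝ)
    (hA : ∀ (x : Fin N → ℝ) (i : Fin N),
      A x i = ∑ j, (γ j)⁻¹ * (∑ m, wb m * x m * (B j).eval (tb m)) * (B j).eval (tl i)) :
    ∀ p q : Polynomial ℝ, p.natDegree < N → q.natDegree < N →
      ∫ s in (-1 : ℝ)..1, p.eval s * q.eval s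
        = ∑ i, wl i * A (fun m => p.eval (tb m)) i * A (fun m => q.eval (tb m)) i := by
  have hB0 : ∀ j, B j ≠ 0 := by
    intro j hj
    have h := hγ_pos j
    rw [hγ j, hj] at h
    simp at h
  have hdisc : ∀ j k, ∑ m, wb m * (B j).eval (tb m) * (B k).eval (tb m)
      = if j = k then γ k else 0 := by
    intro j k
    have hdeg : (B j * B k).natDegree < 2 * N := by
      have h := Polynomial.natDegree_mul_le (p := B j) (q := B k)
      rw [hBdeg, hBdeg] at h
      omega
    have h := hquadb _ hdeg
    simp only [Polynomial.eval_mul, ← mul_assoc] at h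
    rw [h]
    split_ifs with hjk
    · subst hjk
      rw [hγ j]
      simp only [pow_two, mul_assoc]
    · exact hBorth j k hjk
  have hAeval : ∀ p : Polynomial ℝ, p.natDegree < N → ∀ i,
      A (fun m => p.eval (tb m)) i = p.eval (tl i) := by
    intro p hp i
    have hmem := mem_span_of_degree_lt B hBdeg hB0 N le_rfl p
      (p.degree_le_natDegree.trans_lt (by exact_mod_cast hp))
    obtain ⟨c, rfl⟩ := (Submodule.mem_span_range_iff_exists_fun ℝ).1 hmem
    have hcoef : ∀ k, ∑ m, wb m * (∑ j, c j • B j).eval (tb m) * (B k).eval (tb m)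
        = c k * γ k := by
      intro k
      calc ∑ m, wb m * (∑ j, c j • B j).eval (tb m) * (B k).eval (tb m)
          = ∑ m, ∑ j, c j * (wb m * (B j).eval (tb m) * (B k).eval (tb m)) := by
            refine Finset.sum_congr rfl fun m _ => ?_
            rw [Polynomial.eval_finsetSum, Finset.mul_sum, Finset.sum_mul]
            refine Finset.sum_congr rfl fun j _ => ?_
            rw [Polynomial.eval_smul, smul_eq_mul]
            ring
        _ = ∑ j, c j * ∑ m, wb m * (B j).eval (tb m) * (B k).eval (tb m) := by
            rw [Finset.sum_comm]
            simp only [Finset.mul_sum]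
        _ = c k * γ k := by simp [hdisc]
    rw [hA, Polynomial.eval_finsetSum]
    refine Finset.sum_congr rfl fun k _ => ?_
    have hne := (hγ_pos k).ne'
    rw [hcoef, Polynomial.eval_smul, smul_eq_mul]
    field_simp
  intro p q hp hq
  have hdeg : (p * q).natDegree < 2 * N := by
    have h := Polynomial.natDegree_mul_le (p := p) (q := q)
    omega
  have h := hquadl _ hdeg
  simp only [Polynomial.eval_mul] at h
  rw [← h]
  refine Finset.sum_congr rfl fun i _ => ?_
  rw [hAeval p hp, hAeval q hq, mul_assoc]
end
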